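/- Let A be a unital C*-algebra, H₁ a Hilbert space, and [φ_ij]_{i,j=1}^n : A → L(H₁) a completely n-positive map. Suppose (π,S₁,…,S_n,K₁) and (π′,S₁′,…,S_n′,K₁′) are two data where K₁,K₁′ are Hilbert spaces, π : A → L(K₁) and π′ : A → L(K₁′) are unital *-homomorphisms, Sᵢ : H₁ → K₁ and Sᵢ′ : H₁ → K₁′ are bounded operators with φ_ij(a) = Sᵢ* π(a) Sⱼ = Sᵢ′* π′(a) Sⱼ′ for all a ∈ A and all i,j, and both are minimal in the sense that K₁ is the closed linear span of ⋃_{i=1}^n π(A)Sᵢ(H₁) and K₁′ is the closed linear span of ⋃_{i=1}^n π′(A)Sᵢ′(H₁). Then there exists a unitary operator U₁ : K₁ → K₁′ such that U₁Sᵢ = Sᵢ′ for all i ∈ {1,…,n} and U₁π(a) = π′(a)U₁ for all a ∈ A. -/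

import Mathlib

noncomputable section

open scoped InnerProductSpace RightActions ComplexOrder
open ContinuousLinearMap

/-- A square matrix over a ⋆-ring is *positive* if it factors as `star N * N`
(in a C⋆-algebra, such as a matrix algebra over a C⋆-algebra, this is exactly
positivity). -/
def Matrix.IsPosMat {R : Type*} [NonUnitalSemiring R] [StarRing R] {m : ℕ}
    (M : Matrix (Fin m) (Fin m) R) : Prop :=
  ∃ N, M = star N * N

/-- A linear map between ⋆-algebras is *completely positive* if all of its matrix
amplifications `[a_kl] ↦ [φ (a_kl)]` send positive matrices to positive matrices. -/
def IsCompletelyPositive {A B : Type*} [NonUnitalRing A] [StarRing A] [Module ℂ A]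
    [NonUnitalRing B] [StarRing B] [Module ℂ B] (φ : A →ₗ[ℂ] B) : Prop :=
  ∀ (m : ℕ) (M : Matrix (Fin m) (Fin m) A), M.IsPosMat → (M.map φ).IsPosMat

/-- The map `[a_ij] ↦ [φ_ij (a_ij)]` on `n × n` matrices induced by a matrix
`[φ_ij]` of linear maps, bundled as a linear map. -/
def entrywiseMap {A B : Type*} [NonUnitalRing A] [StarRing A] [Module ℂ A]
    [NonUnitalRing B] [StarRing B] [Module ℂ B] {n : ℕ}
    (φ : Fin n → Fin n → (A →ₗ[ℂ] B)) :
    Matrix (Fin n) (Fin n) A →ₗ[ℂ] Matrix (Fin n) (Fin n) B where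
  toFun M := Matrix.of fun i j => φ i j (M i j)
  map_add' M N := by ext i j; simp
  map_smul' c M := by ext i j; simp

/-- An `n × n` matrix `[φ_ij]` of linear maps is *completely `n`-positive* if the induced
map `[a_ij] ↦ [φ_ij (a_ij)]` on `n × n` matrices is completely positive. -/
def IsCompletelyNPositive {A B : Type*} [NonUnitalRing A] [StarRing A] [Module ℂ A]
    [NonUnitalRing B] [StarRing B] [Module ℂ B] {n : ℕ}
    (φ : Fin n → Fin n → (A →ₗ[ℂ] B)) : Prop :=
  IsCompletelyPositive (entrywiseMap φ)

theorem exists_isometryEquiv_of_inner_eq {ι K K' : Type*}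
    [NormedAddCommGroup K] [InnerProductSpace ℂ K] [CompleteSpace K]
    [NormedAddCommGroup K'] [InnerProductSpace ℂ K'] [CompleteSpace K']
    (f : ι → K) (g : ι → K') (h : ∀ x y, ⟪f x, f y⟫_ℂ = ⟪g x, g y⟫_ℂ)
    (hf : (Submodule.span ℂ (Set.range f)).topologicalClosure = ⊤)
    (hg : (Submodule.span ℂ (Set.range g)).topologicalClosure = ⊤) :
    ∃ U : K ≃ₗᵢ[ℂ] K', ∀ x, U (f x) = g x := by
  have h1 : DenseRange (Finsupp.linearCombination ℂ f) := by
    rw [← Submodule.dense_iff_topologicalClosure_eq_top] at hf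
    rw [DenseRange, ← LinearMap.coe_range, Finsupp.range_linearCombination]
    exact hf
  have h2 : DenseRange (Finsupp.linearCombination ℂ g) := by
    rw [← Submodule.dense_iff_topologicalClosure_eq_top] at hg
    rw [DenseRange, ← LinearMap.coe_range, Finsupp.range_linearCombination]
    exact hg
  have h3 : ∀ c : ι →₀ ℂ, ‖Finsupp.linearCombination ℂ g (LinearEquiv.refl ℂ _ c)‖ =
      ‖Finsupp.linearCombination ℂ f c‖ := by
    intro c
    rw [LinearEquiv.refl_apply, @norm_eq_sqrt_re_inner ℂ, @norm_eq_sqrt_re_inner ℂ]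
    congr 2
    simp only [Finsupp.linearCombination_apply, Finsupp.sum, sum_inner, inner_sum,
      inner_smul_left, inner_smul_right, h]
  refine ⟨(LinearEquiv.refl ℂ (ι →₀ ℂ)).extendOfIsometry _ _ h1 h2 h3, fun x => ?_⟩
  have := LinearEquiv.extendOfIsometry_eq (LinearEquiv.refl ℂ (ι →₀ ℂ)) _ _ h1 h2 h3
    (Finsupp.single x 1)
  simpa using this

theorem inner_stinespring {A H K : Type*} [CStarAlgebra A]
    [NormedAddCommGroup H] [InnerProductSpace ℂ H] [CompleteSpace H]
    [NormedAddCommGroup K] [InnerProductSpace ℂ K] [CompleteSpace K]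
    (π : A →⋆ₐ[ℂ] (K →L[ℂ] K)) (S T : H →L[ℂ] K) (a b : A) (x y : H) :
    ⟪π a (S x), π b (T y)⟫_ℂ = ⟪x, (adjoint S ∘L π (star a * b) ∘L T) y⟫_ℂ := by
  rw [map_mul, map_star, star_eq_adjoint]
  simp [adjoint_inner_right]

/-- Two minimal data `(π, S₁, …, S_n, K₁)` and `(π', S₁', …, S_n', K₁')`
realizing the same completely `n`-positive map `[φ_ij]` via
`φ_ij(a) = Sᵢ⋆ π(a) Sⱼ = Sᵢ'⋆ π'(a) Sⱼ'` are unitarily equivalent. -/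
theorem minimal_stinespring_data_unitarily_equivalent
    {A : Type*} [CStarAlgebra A]
    {H₁ : Type*} [NormedAddCommGroup H₁] [InnerProductSpace ℂ H₁] [CompleteSpace H₁]
    {K₁ : Type*} [NormedAddCommGroup K₁] [InnerProductSpace ℂ K₁] [CompleteSpace K₁]
    {K₁' : Type*} [NormedAddCommGroup K₁'] [InnerProductSpace ℂ K₁'] [CompleteSpace K₁']
    {n : ℕ} (φ : Fin n → Fin n → (A →ₗ[ℂ] (H₁ →L[ℂ] H₁)))
    (hφ : IsCompletelyNPositive φ)
    (π : A →⋆ₐ[ℂ] (K₁ →L[ℂ] K₁)) (S : Fin n → (H₁ →L[ℂ] K₁))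
    (π' : A →⋆ₐ[ℂ] (K₁' →L[ℂ] K₁')) (S' : Fin n → (H₁ →L[ℂ] K₁'))
    (hfact : ∀ (a : A) (i j : Fin n), φ i j a = adjoint (S i) ∘L π a ∘L S j)
    (hfact' : ∀ (a : A) (i j : Fin n), φ i j a = adjoint (S' i) ∘L π' a ∘L S' j)
    (hmin : (Submodule.span ℂ
      {v : K₁ | ∃ (i : Fin n) (a : A) (ξ : H₁), v = π a (S i ξ)}).topologicalClosure = ⊤)
    (hmin' : (Submodule.span ℂ
      {v : K₁' | ∃ (i : Fin n) (a : A) (ξ : H₁), v = π' a (S' i ξ)}).topologicalClosure = ⊤) :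
    ∃ U₁ : K₁ ≃ₗᵢ[ℂ] K₁',
      (∀ (i : Fin n) (ξ : H₁), U₁ (S i ξ) = S' i ξ) ∧
      (∀ (a : A) (v : K₁), U₁ (π a v) = π' a (U₁ v)) := by
  let f : Fin n × A × H₁ → K₁ := fun p => π p.2.1 (S p.1 p.2.2)
  let g : Fin n × A × H₁ → K₁' := fun p => π' p.2.1 (S' p.1 p.2.2)
  have ef : {v : K₁ | ∃ (i : Fin n) (a : A) (ξ : H₁), v = π a (S i ξ)} = Set.range f := by
    ext v; simp [f, eq_comm]
  have eg : {v : K₁' | ∃ (i : Fin n) (a : A) (ξ : H₁), v = π' a (S' i ξ)} = Set.range g := by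
    ext v; simp [g, eq_comm]
  rw [ef] at hmin
  rw [eg] at hmin'
  obtain ⟨U, hU⟩ := exists_isometryEquiv_of_inner_eq f g (fun p q => by
    simp only [f, g]
    rw [inner_stinespring, inner_stinespring, ← hfact, ← hfact']) hmin hmin'
  have hU' : ∀ i a ξ, U (π a (S i ξ)) = π' a (S' i ξ) := fun i a ξ => hU (i, a, ξ)
  refine ⟨U, fun i ξ => by simpa using hU' i 1 ξ, fun a v => ?_⟩
  let L : K₁ →L[ℂ] K₁' := (U.toContinuousLinearEquiv : K₁ →L[ℂ] K₁') ∘L π a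
  let R : K₁ →L[ℂ] K₁' := π' a ∘L (U.toContinuousLinearEquiv : K₁ →L[ℂ] K₁')
  have hLR : L = R := by
    refine ContinuousLinearMap.ext_on
      (Submodule.dense_iff_topologicalClosure_eq_top.2 hmin) ?_
    rintro _ ⟨⟨i, b, ξ⟩, rfl⟩
    have := hU' i (a * b) ξ
    simp only [map_mul, ContinuousLinearMap.mul_apply] at this
    simpa [L, R, f, hU'] using this
  exact congrArg (fun T : K₁ →L[ℂ] K₁' => T v) hLR
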